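/- arXiv:math/9311208 — 2 statements merged into one kernel-verified Lean document; each statement's English description precedes it below -/
import Mathlib

section
/- For every q with 0 < q < 1 and all real numbers x and y, max(|x|, |y|)^q = (1/(2π)) cot(πq/2) ∫_ℝ |x + yξ|^q · (|ξ−1|^{−q} − |ξ+1|^{−q})/ξ dξ, where the integral converges absolutely. In particular, γ(dξ) = (|ξ−1|^{−q} − |ξ+1|^{−q})/ξ dξ is a finite nonnegative measure on ℝ and the above is a Levy representation of the q-norm of ℓ_∞². -/
/-!
The density `(|ξ - 1| ^ (-q) - |ξ + 1| ^ (-q)) / ξ` is even and nonnegative, so everything can be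
computed with Tonelli's theorem in `[0, ∞]`. By homogeneity, evenness and the substitution
`ξ ↦ 1 / ξ`, which exchanges `x` and `y`, it suffices to treat `x = 1` and `y = a ∈ [0, 1]`, and to
show that the integral is `2 π tan (π q / 2)` whatever `a` is.

For `ξ > 0` and `b = ±a`, write `|1 + b ξ| ^ q (|ξ - 1| ^ (-q) - |ξ + 1| ^ (-q))` as the integral of
`q s ^ (q - 1) ds` over `|1 + b ξ| / (ξ + 1) < s < |1 + b ξ| / |ξ - 1|`
(`lintegral_layer_fiber`). After exchanging the integrals, the set of `ξ` belonging to a given `s`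
is a union of intervals, and the total measure of the two sets (for `b = a` and `b = -a`) with
respect to `dξ / ξ` is `2 log ((1 + s) / |1 - s|)`, independently of `a` (`lintegral_slice`).

What remains is the Mellin transform of this logarithm (`lintegral_rpow_log`). The power series of
the logarithm turns it into `∑ 8 q / ((2 k + 1) ^ 2 - q ^ 2)`, which is `2 π tan (π q / 2)` by the
partial fraction expansion of the cotangent (`hasSum_tan`).
-/

open MeasureTheory

/-! ### The partial fraction series of the tangent -/

lemma hasSum_cot_real (z : ℝ) (h0 : 0 < z) (h1 : z < 1) :
    HasSum (fun n : ℕ => 1 / (z - (n + 1)) + 1 / (z + (n + 1)))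
      (Real.pi * Real.cot (Real.pi * z) - 1 / z) := by
  have hz : (z : ℂ) ∈ Complex.integerComplement := by
    rintro ⟨n, hn⟩
    have hn' : (n : ℝ) = z := by exact_mod_cast hn
    rw [← hn'] at h0 h1
    norm_cast at h0 h1
    omega
  have hs : HasSum (fun n : ℕ => 1 / ((z : ℂ) - (n + 1)) + 1 / ((z : ℂ) + (n + 1)))
      (Real.pi * Complex.cot (Real.pi * z) - 1 / z) := by
    rw [cot_series_rep' hz]
    exact (summable_cotTerm hz).hasSum
  rw [← Complex.hasSum_ofReal]
  simpa [Complex.ofReal_cot] using hs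

/-- Up to sign, the terms of the cotangent series at `q` with poles at odd integers: the terms with
poles at even integers make up half the cotangent series at
`q / 2`, and `cot (π q / 2) - 2 cot (π q) = tan (π q / 2)`. -/
lemma hasSum_tan (q : ℝ) (h0 : 0 < q) (h1 : q < 1) :
    HasSum (fun k : ℕ => 2 * q / (((2 : ℝ) * k + 1) ^ 2 - q ^ 2))
      (Real.pi / 2 * Real.tan (Real.pi * q / 2)) := by
  have hu := hasSum_cot_real q h0 h1
  have hodd := (hasSum_cot_real (q / 2) (by linarith) (by linarith)).mul_left (1 / 2)
  set u : ℕ → ℝ := fun n : ℕ => 1 / (q - (n + 1)) + 1 / (q + (n + 1)) with hudef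
  have hodd' : HasSum (fun k : ℕ => u (2 * k + 1))
      (1 / 2 * (Real.pi * Real.cot (Real.pi * (q / 2)) - 1 / (q / 2))) := by
    refine hodd.congr_fun fun k => ?_
    have hk : (0 : ℝ) ≤ k := k.cast_nonneg
    have e1 : q / 2 - (k + 1) ≠ 0 := by linarith
    have e2 : q / 2 + (k + 1) ≠ 0 := by positivity
    have e3 : q - (2 * k + 1 + 1) ≠ 0 := by linarith
    have e4 : q + (2 * k + 1 + 1) ≠ 0 := by positivity
    have e5 : q - 2 * (k + 1) ≠ 0 := by linarith
    simp only [hudef]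
    push_cast
    rw [show q - (2 * (k : ℝ) + 1 + 1) = 2 * (q / 2 - (k + 1)) by ring,
      show q + (2 * (k : ℝ) + 1 + 1) = 2 * (q / 2 + (k + 1)) by ring]
    field_simp
  have hev : Summable fun k : ℕ => u (2 * k) :=
    hu.summable.comp_injective (mul_right_injective₀ two_ne_zero)
  have hsum := (hev.hasSum.even_add_odd hodd').unique hu
  have hval : ∑' k : ℕ, u (2 * k) = - (Real.pi / 2 * Real.tan (Real.pi * q / 2)) := by
    have hs : Real.sin (Real.pi * q / 2) ≠ 0 :=
      (Real.sin_pos_of_pos_of_lt_pi (by positivity) (by nlinarith [Real.pi_pos])).ne'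
    have hc : Real.cos (Real.pi * q / 2) ≠ 0 :=
      (Real.cos_pos_of_mem_Ioo ⟨by nlinarith [Real.pi_pos], by nlinarith [Real.pi_pos]⟩).ne'
    have h2 : Real.cot (Real.pi * q) =
        (Real.cos (Real.pi * q / 2) ^ 2 - Real.sin (Real.pi * q / 2) ^ 2) /
          (2 * Real.sin (Real.pi * q / 2) * Real.cos (Real.pi * q / 2)) := by
      rw [Real.cot_eq_cos_div_sin, ← Real.cos_two_mul', ← Real.sin_two_mul,
        show 2 * (Real.pi * q / 2) = Real.pi * q by ring]
    rw [h2, show Real.pi * (q / 2) = Real.pi * q / 2 by ring,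
      Real.cot_eq_cos_div_sin] at hsum
    rw [Real.tan_eq_sin_div_cos]
    rw [← eq_sub_iff_add_eq] at hsum
    rw [hsum]
    field_simp
    ring
  have := hev.hasSum.neg
  rw [hval, neg_neg] at this
  refine this.congr_fun fun k => ?_
  have hk : (0 : ℝ) ≤ k := k.cast_nonneg
  have e1 : q - (2 * k + 1) ≠ 0 := by linarith
  have e2 : q + (2 * k + 1) ≠ 0 := by positivity
  have e3 : (2 * (k : ℝ) + 1) ^ 2 - q ^ 2 ≠ 0 := by nlinarith
  simp only [hudef]
  push_cast
  field_simp
  ring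

/-! ### One-dimensional integrals -/

lemma lintegral_rpow_Ioo (q u v : ℝ) (h0 : 0 < q) (hu : 0 ≤ u) (huv : u ≤ v) :
    ∫⁻ s in Set.Ioo u v, ENNReal.ofReal (q * s ^ (q - 1)) = ENNReal.ofReal (v ^ q - u ^ q) := by
  have hi : IntegrableOn (fun s : ℝ => q * s ^ (q - 1)) (Set.Ioo u v) := by
    have := (intervalIntegral.intervalIntegrable_rpow' (a := u) (b := v) (r := q - 1)
      (by linarith)).const_mul q
    rw [intervalIntegrable_iff_integrableOn_Ioo_of_le huv] at this
    exact this
  rw [← ofReal_integral_eq_lintegral_ofReal hi]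
  · rw [← integral_Ioc_eq_integral_Ioo, ← intervalIntegral.integral_of_le huv,
      intervalIntegral.integral_const_mul, integral_rpow (Or.inl (by linarith))]
    congr 1
    rw [sub_add_cancel]
    field_simp
  · filter_upwards [ae_restrict_mem measurableSet_Ioo] with s hs
    have : 0 ≤ s := hu.trans hs.1.le
    simp only [Pi.zero_apply]
    positivity

lemma lintegral_rpow_Ioi (r : ℝ) (hr : r < 0) :
    ∫⁻ s in Set.Ioi (1 : ℝ), ENNReal.ofReal (s ^ (r - 1)) = ENNReal.ofReal (1 / (-r)) := by
  rw [← ofReal_integral_eq_lintegral_ofReal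
    (integrableOn_Ioi_rpow_of_lt (by linarith) one_pos)]
  · rw [integral_Ioi_rpow_of_lt (by linarith) one_pos]
    congr 1
    rw [sub_add_cancel, Real.one_rpow, neg_div, ← div_neg]
  · filter_upwards [ae_restrict_mem measurableSet_Ioi] with s hs
    have : (0 : ℝ) ≤ s := zero_le_one.trans (le_of_lt hs)
    simp only [Pi.zero_apply]
    positivity

lemma lintegral_inv_Ioo (p r : ℝ) (hp : 0 < p) (hpr : p ≤ r) :
    ∫⁻ ξ in Set.Ioo p r, ENNReal.ofReal ξ⁻¹ = ENNReal.ofReal (Real.log (r / p)) := by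
  have hi : IntegrableOn (fun s : ℝ => s⁻¹) (Set.Ioo p r) := by
    have : IntervalIntegrable (fun s : ℝ => s⁻¹) volume p r :=
      intervalIntegral.intervalIntegrable_inv (fun x hx => by
        rw [Set.uIcc_of_le hpr] at hx
        exact (hp.trans_le hx.1).ne') continuousOn_id
    rwa [intervalIntegrable_iff_integrableOn_Ioo_of_le hpr] at this
  rw [← ofReal_integral_eq_lintegral_ofReal hi]
  · rw [← integral_Ioc_eq_integral_Ioo, ← intervalIntegral.integral_of_le hpr,
      integral_inv_of_pos hp (hp.trans_le hpr)]
  · filter_upwards [ae_restrict_mem measurableSet_Ioo] with s hs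
    have : 0 < s := hp.trans hs.1
    simp only [Pi.zero_apply]
    positivity

/-- The Mellin transform of `s ↦ log ((1 + s) / |1 - s|)`: the logarithm is expanded in powers of
`s` on `(0, 1)` and of `1 / s` on `(1, ∞)`, and the termwise integrals add up to the tangent
series. -/
lemma lintegral_rpow_log (q : ℝ) (h0 : 0 < q) (h1 : q < 1) :
    ∫⁻ s in Set.Ioi (0 : ℝ), ENNReal.ofReal (q * s ^ (q - 1)) *
        (2 * ENNReal.ofReal (Real.log ((1 + s) / |1 - s|))) =
      ENNReal.ofReal (2 * Real.pi * Real.tan (Real.pi * q / 2)) := by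
  have hA : ∫⁻ s in Set.Ioo (0 : ℝ) 1, ENNReal.ofReal (q * s ^ (q - 1)) *
        (2 * ENNReal.ofReal (Real.log ((1 + s) / |1 - s|))) =
      ∑' k : ℕ, ENNReal.ofReal (4 * q / ((2 * k + 1) * (2 * k + 1 + q))) := by
    rw [setLIntegral_congr_fun (g := fun s => ∑' k : ℕ,
      ENNReal.ofReal (4 * q / ((2 * k + 1) * (2 * k + 1 + q))) *
        ENNReal.ofReal ((2 * k + 1 + q) * s ^ ((2 * k + 1 + q) - 1))) measurableSet_Ioo]
    · rw [lintegral_tsum (fun k => by fun_prop)]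
      congr 1 with k
      rw [lintegral_const_mul _ (by fun_prop), lintegral_rpow_Ioo _ _ _ (by positivity) le_rfl
        zero_le_one, Real.one_rpow, Real.zero_rpow (by positivity)]
      simp
    · intro s hs
      have hs0 := hs.1
      have hs1 := hs.2
      have := Real.hasSum_log_sub_log_of_abs_lt_one (x := s) (by rw [abs_of_pos hs0]; exact hs1)
      rw [← Real.log_div (by linarith) (by linarith)] at this
      simp only
      rw [abs_of_pos (by linarith : 0 < 1 - s), ← this.tsum_eq,
        ENNReal.ofReal_tsum_of_nonneg (fun k => by positivity) this.summable,
        ← ENNReal.tsum_mul_left, ← ENNReal.tsum_mul_left]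
      congr 1 with k
      rw [← ENNReal.ofReal_ofNat 2, ← ENNReal.ofReal_mul (by positivity),
        ← ENNReal.ofReal_mul (by positivity), ← ENNReal.ofReal_mul (by positivity)]
      congr 1
      rw [show (2 * (k : ℝ) + 1 + q) - 1 = (q - 1) + ((2 * k + 1 : ℕ) : ℝ) by push_cast; ring,
        Real.rpow_add hs0, Real.rpow_natCast]
      field_simp
      ring
  have hB : ∫⁻ s in Set.Ioi (1 : ℝ), ENNReal.ofReal (q * s ^ (q - 1)) *
        (2 * ENNReal.ofReal (Real.log ((1 + s) / |1 - s|))) =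
      ∑' k : ℕ, ENNReal.ofReal (4 * q / ((2 * k + 1) * (2 * k + 1 - q))) := by
    rw [setLIntegral_congr_fun (g := fun s => ∑' k : ℕ,
      ENNReal.ofReal (4 * q / (2 * k + 1)) *
        ENNReal.ofReal (s ^ ((q - (2 * k + 1)) - 1))) measurableSet_Ioi]
    · rw [lintegral_tsum (fun k => by fun_prop)]
      congr 1 with k
      have hk : (0 : ℝ) ≤ k := k.cast_nonneg
      rw [lintegral_const_mul _ (by fun_prop), lintegral_rpow_Ioi _ (by linarith),
        ← ENNReal.ofReal_mul (by positivity), neg_sub]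
      congr 1
      have : 2 * (k : ℝ) + 1 - q ≠ 0 := by linarith
      field_simp
    · intro s hs
      have hs1 : 1 < s := hs
      have hs0 : 0 < s := by linarith
      have := Real.hasSum_log_sub_log_of_abs_lt_one (x := s⁻¹)
        (by rw [abs_of_pos (by positivity)]; exact inv_lt_one_of_one_lt₀ hs1)
      have hlt : s⁻¹ < 1 := inv_lt_one_of_one_lt₀ hs1
      rw [← Real.log_div (by positivity) (by linarith)] at this
      have e : (1 + s⁻¹) / (1 - s⁻¹) = (1 + s) / |1 - s| := by
        rw [abs_of_neg (by linarith)]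
        have : s - 1 ≠ 0 := by linarith
        have : 1 - s⁻¹ ≠ 0 := by linarith
        rw [div_eq_div_iff this (by linarith)]
        field_simp
        ring
      rw [e] at this
      simp only
      rw [← this.tsum_eq,
        ENNReal.ofReal_tsum_of_nonneg (fun k => by positivity) this.summable,
        ← ENNReal.tsum_mul_left, ← ENNReal.tsum_mul_left]
      congr 1 with k
      rw [← ENNReal.ofReal_ofNat 2, ← ENNReal.ofReal_mul (by positivity),
        ← ENNReal.ofReal_mul (by positivity), ← ENNReal.ofReal_mul (by positivity)]
      congr 1
      rw [show (q - (2 * (k : ℝ) + 1)) - 1 = (q - 1) - ((2 * k + 1 : ℕ) : ℝ) by push_cast; ring,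
        Real.rpow_sub hs0 (q - 1), Real.rpow_natCast, inv_pow]
      field_simp
      ring
  have hsplit : Set.Ioi (0 : ℝ) = Set.Ioc 0 1 ∪ Set.Ioi 1 :=
    (Set.Ioc_union_Ioi_eq_Ioi zero_le_one).symm
  rw [hsplit, lintegral_union measurableSet_Ioi Set.Ioc_disjoint_Ioi_same,
    ← setLIntegral_congr Ioo_ae_eq_Ioc, hA, hB, ← ENNReal.tsum_add]
  have ht := (hasSum_tan q h0 h1).mul_left 4
  have hnn : ∀ k : ℕ, 0 < ((2 : ℝ) * k + 1) ^ 2 - q ^ 2 := fun k => by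
    have hk : (0 : ℝ) ≤ k := k.cast_nonneg
    nlinarith
  rw [show 2 * Real.pi * Real.tan (Real.pi * q / 2) =
    4 * (Real.pi / 2 * Real.tan (Real.pi * q / 2)) by ring, ← ht.tsum_eq,
    ENNReal.ofReal_tsum_of_nonneg (fun k => by have := hnn k; positivity) ht.summable]
  congr 1 with k
  have hk : (0 : ℝ) ≤ k := k.cast_nonneg
  have e1 : 0 < 2 * (k : ℝ) + 1 - q := by linarith
  rw [← ENNReal.ofReal_add (by positivity) (by positivity)]
  congr 1
  have := (hnn k).ne'
  rw [show (2 * (k : ℝ) + 1) ^ 2 - q ^ 2 = (2 * k + 1 - q) * (2 * k + 1 + q) by ring]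
  have e2 := e1.ne'
  field_simp
  ring

/-! ### The layer-cake sets -/

/-- The set of pairs `(ξ, s)` with `s` strictly between `|1 + b ξ| / (ξ + 1)` and
`|1 + b ξ| / |ξ - 1|`, written without division. It is used for `ξ, s > 0` only. -/
def layer (b : ℝ) : Set (ℝ × ℝ) :=
  {p | p.2 * |p.1 - 1| < |1 + b * p.1| ∧ |1 + b * p.1| < p.2 * (p.1 + 1)}

lemma measurableSet_layer (b : ℝ) : MeasurableSet (layer b) := by
  have h1 : Measurable fun p : ℝ × ℝ => p.2 * |p.1 - 1| := by fun_prop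
  have h2 : Measurable fun p : ℝ × ℝ => |1 + b * p.1| := by fun_prop
  have h3 : Measurable fun p : ℝ × ℝ => p.2 * (p.1 + 1) := by fun_prop
  exact (measurableSet_lt h1 h2).inter (measurableSet_lt h2 h3)

lemma mem_layer_pos {a s ξ : ℝ} (ha : 0 ≤ a) (hs : 0 < s) (hξ : 0 < ξ) :
    (ξ, s) ∈ layer a ↔ s - 1 < ξ * (s + a) ∧ ξ * (s - a) < 1 + s ∧ 1 - s < ξ * (s - a) := by
  have h1 : 0 < 1 + a * ξ := by positivity
  have h2 : s * |ξ - 1| = |s * (ξ - 1)| := by rw [abs_mul, abs_of_pos hs]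
  simp only [layer, Set.mem_ofPred_eq]
  rw [abs_of_pos h1, h2, abs_lt]
  constructor
  · rintro ⟨⟨_, _⟩, _⟩
    refine ⟨?_, ?_, ?_⟩ <;> linarith
  · rintro ⟨_, _, _⟩
    refine ⟨⟨?_, ?_⟩, ?_⟩ <;> linarith

lemma mem_layer_neg {a s ξ : ℝ} (hs : 0 < s) :
    (ξ, s) ∈ layer (-a) ↔
      ((ξ * (s + a) < 1 + s ∧ s - 1 < ξ * (s - a)) ∨ (1 + s < ξ * (s + a) ∧ ξ * (s - a) < s - 1)) ∧
        1 - s < ξ * (s + a) ∧ - (1 + s) < ξ * (s - a) := by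
  have h2 : s * |ξ - 1| = |s * (ξ - 1)| := by rw [abs_mul, abs_of_pos hs]
  have h3 : |s * (ξ - 1)| < |1 + -a * ξ| ↔
      0 < ((1 + s) - ξ * (s + a)) * (ξ * (s - a) - (s - 1)) := by
    rw [← sq_lt_sq, ← sub_pos]
    ring_nf
  simp only [layer, Set.mem_ofPred_eq]
  rw [h2, h3, mul_pos_iff, abs_lt]
  constructor
  · rintro ⟨⟨_, _⟩ | ⟨_, _⟩, _, _⟩
    · exact ⟨Or.inl ⟨by linarith, by linarith⟩, by linarith, by linarith⟩
    · exact ⟨Or.inr ⟨by linarith, by linarith⟩, by linarith, by linarith⟩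
  · rintro ⟨⟨_, _⟩ | ⟨_, _⟩, _, _⟩
    · exact ⟨Or.inl ⟨by linarith, by linarith⟩, by linarith, by linarith⟩
    · exact ⟨Or.inr ⟨by linarith, by linarith⟩, by linarith, by linarith⟩

lemma lintegral_layer_eq (b s : ℝ) (S : Set ℝ) (hS : Set.Ioi 0 ∩ {ξ | (ξ, s) ∈ layer b} = S) :
    ∫⁻ ξ in Set.Ioi (0 : ℝ), (layer b).indicator 1 (ξ, s) * ENNReal.ofReal ξ⁻¹ =
      ∫⁻ ξ in S, ENNReal.ofReal ξ⁻¹ := by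
  have hm : MeasurableSet {ξ : ℝ | (ξ, s) ∈ layer b} :=
    (measurableSet_layer b).preimage (by fun_prop : Measurable fun ξ : ℝ => (ξ, s))
  rw [← hS, Set.inter_comm, ← Measure.restrict_restrict hm, ← lintegral_indicator hm]
  congr 1 with ξ
  by_cases h : (ξ, s) ∈ layer b
  · rw [Set.indicator_of_mem h, Set.indicator_of_mem (by exact h)]; simp
  · rw [Set.indicator_of_notMem h, Set.indicator_of_notMem (by exact h)]; simp

/-- For fixed `s`, the slices of `layer a` and `layer (-a)` are bounded by the four points
`|1 - s| / |s ± a|` and `(1 + s) / |s ± a|`. Their measures for `dξ / ξ` are logarithms of ratios of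
these points, in whose sum the dependence on `a` cancels; this is where `a ≤ 1` is essential. -/
lemma lintegral_slice {a s : ℝ} (ha : 0 ≤ a) (ha1 : a ≤ 1) (hs : 0 < s) (hsa : s ≠ a)
    (hs1 : s ≠ 1) :
    (∫⁻ ξ in Set.Ioi (0 : ℝ), (layer a).indicator 1 (ξ, s) * ENNReal.ofReal ξ⁻¹) +
        ∫⁻ ξ in Set.Ioi (0 : ℝ), (layer (-a)).indicator 1 (ξ, s) * ENNReal.ofReal ξ⁻¹ =
      2 * ENNReal.ofReal (Real.log ((1 + s) / |1 - s|)) := by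
  have hp : 0 < s + a := by positivity
  rcases lt_or_gt_of_ne hs1 with h1 | h1
  · have d : 0 < 1 - s := by linarith
    have hI : ∀ c : ℝ, 0 < c → ∫⁻ ξ in Set.Ioo ((1 - s) / c) ((1 + s) / c), ENNReal.ofReal ξ⁻¹ =
        ENNReal.ofReal (Real.log ((1 + s) / (1 - s))) := fun c hc => by
      rw [lintegral_inv_Ioo _ _ (by positivity) (by gcongr; linarith)]
      congr 2
      field_simp
    rw [abs_of_pos d, two_mul]
    rcases lt_or_gt_of_ne hsa with h2 | h2
    · have hn : 0 < a - s := by linarith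
      rw [lintegral_layer_eq a s ∅, lintegral_layer_eq (-a) s
        (Set.Ioo ((1 - s) / (s + a)) ((1 + s) / (s + a)) ∪
          Set.Ioo ((1 - s) / (a - s)) ((1 + s) / (a - s)))]
      · rw [lintegral_union measurableSet_Ioo, hI _ hp, hI _ hn]
        · simp
        · rw [Set.disjoint_left]
          rintro ξ ⟨_, h4⟩ ⟨h5, _⟩
          rw [lt_div_iff₀ hp] at h4
          rw [div_lt_iff₀ hn] at h5
          nlinarith [mul_lt_mul_of_pos_right h4 hn, mul_lt_mul_of_pos_right h5 hp]
      · ext ξ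
        simp only [Set.mem_inter_iff, Set.mem_Ioi, Set.mem_ofPred_eq, Set.mem_union, Set.mem_Ioo]
        rw [mem_layer_neg hs, div_lt_iff₀ hp, lt_div_iff₀ hp, div_lt_iff₀ hn, lt_div_iff₀ hn]
        constructor
        · rintro ⟨_, ⟨_, _⟩ | ⟨_, _⟩, _, _⟩
          · exact Or.inl ⟨by linarith, by linarith⟩
          · exact Or.inr ⟨by linarith, by linarith⟩
        · rintro (⟨h3, h4⟩ | ⟨h3, h4⟩)
          · have hξ : 0 < ξ := pos_of_mul_pos_left (d.trans h3) hp.le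
            have : ξ * (a - s) < 1 - s := by
              by_contra! h5
              nlinarith [mul_lt_mul_of_pos_right h4 hn, mul_le_mul_of_nonneg_right h5 hp.le]
            exact ⟨hξ, Or.inl ⟨by linarith, by linarith⟩, by linarith, by linarith⟩
          · have hξ : 0 < ξ := pos_of_mul_pos_left (d.trans h3) hn.le
            have : 1 + s < ξ * (s + a) := by
              by_contra! h5
              nlinarith [mul_lt_mul_of_pos_right h3 hp, mul_le_mul_of_nonneg_right h5 hn.le]
            exact ⟨hξ, Or.inr ⟨by linarith, by linarith⟩, by linarith, by linarith⟩
      · ext ξ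
        simp only [Set.mem_inter_iff, Set.mem_Ioi, Set.mem_ofPred_eq, Set.mem_empty_iff_false,
          iff_false, not_and]
        intro hξ
        rw [mem_layer_pos ha hs hξ]
        rintro ⟨_, _, _⟩
        nlinarith
    · have hn : 0 < s - a := by linarith
      rw [lintegral_layer_eq a s (Set.Ioo ((1 - s) / (s - a)) ((1 + s) / (s - a))),
        lintegral_layer_eq (-a) s (Set.Ioo ((1 - s) / (s + a)) ((1 + s) / (s + a))),
        hI _ hp, hI _ hn]
      · ext ξ
        simp only [Set.mem_inter_iff, Set.mem_Ioi, Set.mem_ofPred_eq, Set.mem_Ioo]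
        rw [mem_layer_neg hs, div_lt_iff₀ hp, lt_div_iff₀ hp]
        constructor
        · rintro ⟨_, ⟨_, _⟩ | ⟨_, _⟩, _, _⟩
          · exact ⟨by linarith, by linarith⟩
          · nlinarith
        · rintro ⟨h3, h4⟩
          have hξ : 0 < ξ := pos_of_mul_pos_left (d.trans h3) hp.le
          have := mul_pos hξ hn
          exact ⟨hξ, Or.inl ⟨by linarith, by linarith⟩, by linarith, by linarith⟩
      · ext ξ
        simp only [Set.mem_inter_iff, Set.mem_Ioi, Set.mem_ofPred_eq, Set.mem_Ioo]
        rw [div_lt_iff₀ hn, lt_div_iff₀ hn]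
        constructor
        · rintro ⟨hξ, h⟩
          rw [mem_layer_pos ha hs hξ] at h
          exact ⟨h.2.2, h.2.1⟩
        · rintro ⟨h3, h4⟩
          have hξ : 0 < ξ := pos_of_mul_pos_left (d.trans h3) hn.le
          have := mul_pos hξ hp
          rw [mem_layer_pos ha hs hξ]
          exact ⟨hξ, by linarith, h4, h3⟩
  · have d : 0 < s - 1 := by linarith
    have hn : 0 < s - a := by linarith
    have hle : (s - 1) * (s + a) ≤ (1 + s) * (s - a) := by nlinarith
    have hle' : (s - 1) * (s - a) ≤ (1 + s) * (s + a) := by nlinarith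
    have hpq : (s - 1) / (s + a) ≤ (1 + s) / (s - a) := by
      rwa [div_le_div_iff₀ hp hn]
    have hpq' : (s - 1) / (s - a) ≤ (1 + s) / (s + a) := by
      rwa [div_le_div_iff₀ hn hp]
    rw [lintegral_layer_eq a s (Set.Ioo ((s - 1) / (s + a)) ((1 + s) / (s - a))),
        lintegral_layer_eq (-a) s (Set.Ioo ((s - 1) / (s - a)) ((1 + s) / (s + a))),
        lintegral_inv_Ioo _ _ (by positivity) hpq, lintegral_inv_Ioo _ _ (by positivity) hpq']
    · rw [abs_of_neg (by linarith), ← ENNReal.ofReal_add, ← ENNReal.ofReal_ofNat 2,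
        ← ENNReal.ofReal_mul (by positivity)]
      · congr 1
        rw [← Real.log_mul (by positivity) (by positivity), neg_sub]
        have : Real.log (((1 + s) / (s - 1)) ^ 2) = 2 * Real.log ((1 + s) / (s - 1)) := by
          simp [Real.log_pow]
        refine Eq.trans ?_ this
        congr 1
        field_simp
      · exact Real.log_nonneg (by rwa [one_le_div (by positivity)])
      · exact Real.log_nonneg (by rwa [one_le_div (by positivity)])
    · ext ξ
      simp only [Set.mem_inter_iff, Set.mem_Ioi, Set.mem_ofPred_eq, Set.mem_Ioo]
      rw [mem_layer_neg hs, div_lt_iff₀ hn, lt_div_iff₀ hp]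
      constructor
      · rintro ⟨_, ⟨_, _⟩ | ⟨h3, h4⟩, _, _⟩
        · exact ⟨by linarith, by linarith⟩
        · nlinarith [mul_lt_mul_of_pos_right h3 hn, mul_lt_mul_of_pos_right h4 hp]
      · rintro ⟨h3, h4⟩
        have hξ : 0 < ξ := pos_of_mul_pos_left (d.trans h3) hn.le
        have := mul_pos hξ hp
        exact ⟨hξ, Or.inl ⟨by linarith, by linarith⟩, by linarith, by linarith⟩
    · ext ξ
      simp only [Set.mem_inter_iff, Set.mem_Ioi, Set.mem_ofPred_eq, Set.mem_Ioo]
      rw [div_lt_iff₀ hp, lt_div_iff₀ hn]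
      constructor
      · rintro ⟨hξ, h⟩
        rw [mem_layer_pos ha hs hξ] at h
        exact ⟨h.1, h.2.1⟩
      · rintro ⟨h3, h4⟩
        have hξ : 0 < ξ := pos_of_mul_pos_left (d.trans h3) hp.le
        have := mul_pos hξ hn
        rw [mem_layer_pos ha hs hξ]
        exact ⟨hξ, h3, h4, by linarith⟩

/-! ### The integral on the half-line for `x = 1` and `0 ≤ y ≤ 1` -/

/-- The density of the Levy measure, with value `0` at `ξ = 0` and negative values at `ξ = ±1`, both
by the conventions for division by zero and for `Real.rpow`. -/
noncomputable def levyDensity (q ξ : ℝ) : ℝ := (|ξ - 1| ^ (-q) - |ξ + 1| ^ (-q)) / ξ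

/-- The layer-cake formula: for fixed `ξ`, integrating `d(s ^ q)` over the fibre of `layer b`
gives `|1 + b ξ| ^ q * (|ξ - 1| ^ (-q) - |ξ + 1| ^ (-q))`. -/
lemma lintegral_layer_fiber {q b ξ : ℝ} (h0 : 0 < q) (hξ : 0 < ξ) (hξ1 : ξ ≠ 1) :
    ∫⁻ s in Set.Ioi (0 : ℝ), (layer b).indicator 1 (ξ, s) * ENNReal.ofReal ξ⁻¹ *
        ENNReal.ofReal (q * s ^ (q - 1)) =
      ENNReal.ofReal (|1 + b * ξ| ^ q * levyDensity q ξ) := by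
  set c := |1 + b * ξ| with hc
  have hc0 : 0 ≤ c := abs_nonneg _
  have h1 : 0 < |ξ - 1| := abs_pos.2 (sub_ne_zero.2 hξ1)
  have h2 : 0 < ξ + 1 := by linarith
  have hle : |ξ - 1| ≤ ξ + 1 := by rw [abs_le]; constructor <;> linarith
  have hu : 0 ≤ c / (ξ + 1) := by positivity
  have huv : c / (ξ + 1) ≤ c / |ξ - 1| := by gcongr
  have hset : ∀ s : ℝ, (ξ, s) ∈ layer b ↔ s ∈ Set.Ioo (c / (ξ + 1)) (c / |ξ - 1|) := fun s => by
    simp only [layer, Set.mem_ofPred_eq, Set.mem_Ioo]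
    rw [div_lt_iff₀ h2, lt_div_iff₀ h1, and_comm]
  have hI : ∀ s : ℝ, (layer b).indicator 1 (ξ, s) * ENNReal.ofReal ξ⁻¹ *
        ENNReal.ofReal (q * s ^ (q - 1)) =
      (Set.Ioo (c / (ξ + 1)) (c / |ξ - 1|)).indicator
        (fun s => ENNReal.ofReal ξ⁻¹ * ENNReal.ofReal (q * s ^ (q - 1))) s := fun s => by
    by_cases h : (ξ, s) ∈ layer b
    · rw [Set.indicator_of_mem h, Set.indicator_of_mem ((hset s).1 h)]; simp
    · rw [Set.indicator_of_notMem h, Set.indicator_of_notMem (fun h' => h ((hset s).2 h'))]; simp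
  simp_rw [hI]
  rw [setLIntegral_indicator measurableSet_Ioo, Set.inter_eq_left.2
    (fun s hs => Set.mem_Ioi.2 (hu.trans_lt hs.1)), lintegral_const_mul _ (by fun_prop),
    lintegral_rpow_Ioo _ _ _ h0 hu huv, ← ENNReal.ofReal_mul (by positivity)]
  congr 1
  rw [levyDensity, Real.div_rpow hc0 h1.le, Real.div_rpow hc0 h2.le, abs_of_pos h2,
    Real.rpow_neg h1.le, Real.rpow_neg h2.le]
  field_simp

lemma lintegral_half_unit {q a : ℝ} (h0 : 0 < q) (h1 : q < 1) (ha : 0 ≤ a) (ha1 : a ≤ 1) :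
    ∫⁻ ξ in Set.Ioi (0 : ℝ), (ENNReal.ofReal (|1 + a * ξ| ^ q * levyDensity q ξ) +
        ENNReal.ofReal (|1 + -a * ξ| ^ q * levyDensity q ξ)) =
      ENNReal.ofReal (2 * Real.pi * Real.tan (Real.pi * q / 2)) := by
  have hm : ∀ b : ℝ, Measurable (fun p : ℝ × ℝ => (layer b).indicator (1 : ℝ × ℝ → ENNReal) p *
      ENNReal.ofReal p.1⁻¹) := fun b =>
    (measurable_one.indicator (measurableSet_layer b)).mul (by fun_prop)
  have hmq : ∀ b : ℝ, Measurable (fun p : ℝ × ℝ => (layer b).indicator (1 : ℝ × ℝ → ENNReal) p *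
      ENNReal.ofReal p.1⁻¹ * ENNReal.ofReal (q * p.2 ^ (q - 1))) := fun b =>
    (hm b).mul (by fun_prop)
  have hms : ∀ b s : ℝ, Measurable (fun ξ : ℝ => (layer b).indicator (1 : ℝ × ℝ → ENNReal) (ξ, s) *
      ENNReal.ofReal ξ⁻¹) := fun b s =>
    (hm b).comp (by fun_prop : Measurable fun ξ : ℝ => (ξ, s))
  have hmqs : ∀ b ξ : ℝ, Measurable (fun s : ℝ => (layer b).indicator (1 : ℝ × ℝ → ENNReal) (ξ, s) *
      ENNReal.ofReal ξ⁻¹ * ENNReal.ofReal (q * s ^ (q - 1))) := fun b ξ =>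
    (hmq b).comp (by fun_prop : Measurable fun s : ℝ => (ξ, s))
  calc _ = ∫⁻ ξ in Set.Ioi (0 : ℝ), ∫⁻ s in Set.Ioi (0 : ℝ),
        ((layer a).indicator 1 (ξ, s) * ENNReal.ofReal ξ⁻¹ * ENNReal.ofReal (q * s ^ (q - 1)) +
        (layer (-a)).indicator 1 (ξ, s) * ENNReal.ofReal ξ⁻¹ *
          ENNReal.ofReal (q * s ^ (q - 1))) := by
        refine lintegral_congr_ae ?_
        filter_upwards [ae_restrict_mem measurableSet_Ioi,
          ae_restrict_of_ae (Measure.ae_ne volume (1 : ℝ))] with ξ hξ hξ1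
        rw [lintegral_add_left (hmqs a ξ), lintegral_layer_fiber h0 hξ hξ1,
          lintegral_layer_fiber h0 hξ hξ1]
    _ = ∫⁻ s in Set.Ioi (0 : ℝ), ∫⁻ ξ in Set.Ioi (0 : ℝ),
        ((layer a).indicator 1 (ξ, s) * ENNReal.ofReal ξ⁻¹ * ENNReal.ofReal (q * s ^ (q - 1)) +
        (layer (-a)).indicator 1 (ξ, s) * ENNReal.ofReal ξ⁻¹ *
          ENNReal.ofReal (q * s ^ (q - 1))) :=
        lintegral_lintegral_swap ((hmq a).add (hmq (-a))).aemeasurable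
    _ = ∫⁻ s in Set.Ioi (0 : ℝ), ENNReal.ofReal (q * s ^ (q - 1)) *
        (2 * ENNReal.ofReal (Real.log ((1 + s) / |1 - s|))) := by
        refine lintegral_congr_ae ?_
        filter_upwards [ae_restrict_mem measurableSet_Ioi,
          ae_restrict_of_ae (Measure.ae_ne volume (1 : ℝ)),
          ae_restrict_of_ae (Measure.ae_ne volume a)] with s hs hs1 hsa
        rw [lintegral_add_left ((hms a s).mul_const _), lintegral_mul_const _ (hms a s),
          lintegral_mul_const _ (hms (-a) s), ← add_mul, lintegral_slice ha ha1 hs hsa hs1,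
          mul_comm]
    _ = _ := lintegral_rpow_log q h0 h1

/-! ### Symmetries and the general case -/

lemma levyDensity_neg (q ξ : ℝ) : levyDensity q (-ξ) = levyDensity q ξ := by
  simp only [levyDensity]
  rw [show -ξ - 1 = -(ξ + 1) by ring, show -ξ + 1 = -(ξ - 1) by ring, abs_neg, abs_neg, div_neg,
    ← neg_div, neg_sub]

lemma measurable_levyDensity (q : ℝ) : Measurable (levyDensity q) := by
  unfold levyDensity
  fun_prop

/-- The Levy integral as a Lebesgue integral in `[0, ∞]`; the truncation of negative values by
`ENNReal.ofReal` is only felt at `ξ = ±1`. -/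
noncomputable def levyLIntegral (q x y : ℝ) : ENNReal :=
  ∫⁻ ξ : ℝ, ENNReal.ofReal (|x + y * ξ| ^ q * levyDensity q ξ)

lemma levyLIntegral_eq_half (q x y : ℝ) : levyLIntegral q x y =
    ∫⁻ ξ in Set.Ioi (0 : ℝ), (ENNReal.ofReal (|x + y * ξ| ^ q * levyDensity q ξ) +
        ENNReal.ofReal (|x + -y * ξ| ^ q * levyDensity q ξ)) := by
  have hd := measurable_levyDensity q
  rw [lintegral_add_left (by fun_prop), levyLIntegral,
    ← lintegral_add_compl _ (measurableSet_Ioi (a := (0 : ℝ))), Set.compl_Ioi]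
  congr 1
  rw [← setLIntegral_congr Iio_ae_eq_Iic]
  have := (Measure.measurePreserving_neg (volume : Measure ℝ)).setLIntegral_comp_preimage
    (measurableSet_Iio (a := (0 : ℝ)))
    (f := fun ξ => ENNReal.ofReal (|x + y * ξ| ^ q * levyDensity q ξ)) (by fun_prop)
  rw [← this]
  have hpre : (Neg.neg ⁻¹' Set.Iio (0 : ℝ)) = Set.Ioi 0 := by ext; simp
  rw [hpre]
  simp only [levyDensity_neg, mul_neg, neg_mul]

lemma levyLIntegral_neg_right (q x y : ℝ) : levyLIntegral q x (-y) = levyLIntegral q x y := by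
  rw [levyLIntegral_eq_half, levyLIntegral_eq_half, neg_neg]
  simp only [add_comm]

lemma levyLIntegral_smul {q : ℝ} (x y t : ℝ) :
    levyLIntegral q (t * x) (t * y) = ENNReal.ofReal (|t| ^ q) * levyLIntegral q x y := by
  have hd := measurable_levyDensity q
  rw [levyLIntegral, levyLIntegral, ← lintegral_const_mul _ (by fun_prop)]
  congr 1 with ξ
  rw [← ENNReal.ofReal_mul (by positivity), ← mul_assoc,
    ← Real.mul_rpow (abs_nonneg _) (abs_nonneg _), ← abs_mul]
  ring_nf

lemma levyDensity_inv {q ξ : ℝ} (hξ : ξ ≠ 0) :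
    levyDensity q ξ⁻¹ = |ξ| ^ q * ξ ^ 2 * levyDensity q ξ := by
  have e1 : |ξ⁻¹ - 1| = |ξ - 1| / |ξ| := by
    rw [← abs_div, abs_sub_comm]
    congr 1
    field_simp
  have e2 : |ξ⁻¹ + 1| = |ξ + 1| / |ξ| := by
    rw [← abs_div]
    congr 1
    field_simp
    ring
  have hp : 0 < |ξ| ^ q := Real.rpow_pos_of_pos (abs_pos.2 hξ) q
  rw [levyDensity, levyDensity, e1, e2, Real.div_rpow (abs_nonneg _) (abs_nonneg _),
    Real.div_rpow (abs_nonneg _) (abs_nonneg _), Real.rpow_neg (abs_nonneg ξ)]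
  field_simp

/-- The integral is symmetric in `x` and `y` by the substitution `ξ ↦ 1 / ξ`. -/
lemma levyLIntegral_swap (q x y : ℝ) : levyLIntegral q x y = levyLIntegral q y x := by
  have himg : (fun ξ : ℝ => ξ⁻¹) '' {0}ᶜ = {0}ᶜ := by
    ext ξ
    constructor
    · rintro ⟨η, hη, rfl⟩
      exact inv_ne_zero hη
    · intro hξ
      exact ⟨ξ⁻¹, inv_ne_zero hξ, inv_inv ξ⟩
  have h := lintegral_image_eq_lintegral_abs_deriv_mul (s := {(0 : ℝ)}ᶜ) (f := fun ξ => ξ⁻¹)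
    (f' := fun ξ => -(ξ ^ 2)⁻¹) (measurableSet_singleton _).compl
    (fun ξ hξ => (hasDerivAt_inv hξ).hasDerivWithinAt) inv_injective.injOn
    (fun ξ => ENNReal.ofReal (|x + y * ξ| ^ q * levyDensity q ξ))
  rw [himg] at h
  have h2 : ∫⁻ ξ in {(0 : ℝ)}ᶜ, ENNReal.ofReal |-(ξ ^ 2)⁻¹| *
        ENNReal.ofReal (|x + y * ξ⁻¹| ^ q * levyDensity q ξ⁻¹) =
      ∫⁻ ξ in {(0 : ℝ)}ᶜ, ENNReal.ofReal (|y + x * ξ| ^ q * levyDensity q ξ) := by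
    refine setLIntegral_congr_fun (measurableSet_singleton _).compl fun ξ hξ => ?_
    have hξ0 : ξ ≠ 0 := hξ
    rw [← ENNReal.ofReal_mul (abs_nonneg _), levyDensity_inv hξ0, abs_neg,
      abs_of_nonneg (by positivity)]
    congr 1
    have e : |y + x * ξ| = |x + y * ξ⁻¹| * |ξ| := by
      rw [← abs_mul]
      congr 1
      field_simp
      ring
    rw [e, Real.mul_rpow (abs_nonneg _) (abs_nonneg _)]
    field_simp
  rw [h2, Measure.restrict_eq_self_of_ae_mem (s := {(0 : ℝ)}ᶜ) (Measure.ae_ne volume (0 : ℝ))] at h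
  exact h

lemma levyLIntegral_of_le {q : ℝ} (h0 : 0 < q) (h1 : q < 1) {x y : ℝ} (hxy : |y| ≤ |x|) :
    levyLIntegral q x y =
      ENNReal.ofReal (2 * Real.pi * Real.tan (Real.pi * q / 2) * |x| ^ q) := by
  rcases eq_or_ne x 0 with rfl | hx
  · have hy : y = 0 := by simpa using hxy
    simp [levyLIntegral, hy, Real.zero_rpow h0.ne']
  · have hb : |y / x| ≤ 1 := by
      rw [abs_div]
      exact div_le_one_of_le₀ hxy (abs_nonneg _)
    have habs : levyLIntegral q 1 (y / x) = levyLIntegral q 1 |y / x| := by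
      rcases abs_choice (y / x) with h | h
      · rw [h]
      · rw [h, levyLIntegral_neg_right]
    have hsc := levyLIntegral_smul (q := q) 1 (y / x) x
    rw [mul_one, mul_div_cancel₀ _ hx] at hsc
    rw [hsc, habs, levyLIntegral_eq_half, lintegral_half_unit h0 h1 (abs_nonneg _) hb,
      ← ENNReal.ofReal_mul (by positivity), mul_comm]

lemma levyLIntegral_eq {q : ℝ} (h0 : 0 < q) (h1 : q < 1) (x y : ℝ) :
    levyLIntegral q x y =
      ENNReal.ofReal (2 * Real.pi * Real.tan (Real.pi * q / 2) * max |x| |y| ^ q) := by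
  rcases le_total |y| |x| with h | h
  · rw [max_eq_left h, levyLIntegral_of_le h0 h1 h]
  · rw [max_eq_right h, levyLIntegral_swap, levyLIntegral_of_le h0 h1 h]

lemma levyDensity_nonneg {q ξ : ℝ} (h0 : 0 < q) (hξ : ξ ≠ 1) (hξ' : ξ ≠ -1) :
    0 ≤ levyDensity q ξ := by
  have key : ∀ η : ℝ, 0 ≤ η → η ≠ 1 → 0 ≤ levyDensity q η := fun η hη hη1 => by
    refine div_nonneg (sub_nonneg.2 ?_) hη
    refine Real.rpow_le_rpow_of_nonpos (abs_pos.2 (sub_ne_zero.2 hη1)) ?_ (by linarith)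
    rw [abs_of_nonneg (by linarith : 0 ≤ η + 1), abs_le]
    constructor <;> linarith
  rcases le_total 0 ξ with h | h
  · exact key ξ h hξ
  · rw [← levyDensity_neg]
    exact key _ (by linarith) (fun h' => hξ' (by linarith))

lemma levy_integrable_and_integral {q : ℝ} (h0 : 0 < q) (h1 : q < 1) (x y : ℝ) :
    Integrable (fun ξ : ℝ => |x + y * ξ| ^ q * levyDensity q ξ) volume ∧
      ∫ ξ : ℝ, |x + y * ξ| ^ q * levyDensity q ξ =
        2 * Real.pi * Real.tan (Real.pi * q / 2) * max |x| |y| ^ q := by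
  have hd := measurable_levyDensity q
  have hm : AEStronglyMeasurable (fun ξ : ℝ => |x + y * ξ| ^ q * levyDensity q ξ) volume :=
    Measurable.aestronglyMeasurable (by fun_prop)
  have hnn : 0 ≤ᵐ[volume] fun ξ : ℝ => |x + y * ξ| ^ q * levyDensity q ξ := by
    filter_upwards [Measure.ae_ne volume (1 : ℝ), Measure.ae_ne volume (-1 : ℝ)] with ξ h h'
    exact mul_nonneg (by positivity) (levyDensity_nonneg h0 h h')
  have hL : ∫⁻ ξ : ℝ, ENNReal.ofReal (|x + y * ξ| ^ q * levyDensity q ξ) = _ :=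
    levyLIntegral_eq h0 h1 x y
  have htan : 0 ≤ Real.tan (Real.pi * q / 2) :=
    Real.tan_nonneg_of_nonneg_of_le_pi_div_two (by positivity) (by nlinarith [Real.pi_pos])
  constructor
  · rw [← lintegral_ofReal_ne_top_iff_integrable hm hnn, hL]
    exact ENNReal.ofReal_ne_top
  · rw [integral_eq_lintegral_of_nonneg_ae hnn hm, hL, ENNReal.toReal_ofReal (by positivity)]

/-- The Levy representation (6) of the `q`-norm of `ℓ_∞²` for `0 < q < 1`:
`max(|x|,|y|)^q = (1/(2π)) cot(πq/2) ∫ |x + yξ|^q (|ξ−1|^{−q} − |ξ+1|^{−q})/ξ dξ`,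
the integral converging absolutely, the density being integrable and
nonnegative (away from `±1`, where the rpow convention gives a junk value),
so that it defines a finite nonnegative measure on `ℝ`. -/
theorem stmt17 (q : ℝ) (hq0 : 0 < q) (hq1 : q < 1) (x y : ℝ) :
    ((max |x| |y|) ^ q =
      (1 / (2 * Real.pi)) * Real.cot (Real.pi * q / 2) *
        ∫ ξ : ℝ, |x + y * ξ| ^ q * ((|ξ - 1| ^ (-q) - |ξ + 1| ^ (-q)) / ξ)) ∧
    Integrable (fun ξ : ℝ =>
      |x + y * ξ| ^ q * ((|ξ - 1| ^ (-q) - |ξ + 1| ^ (-q)) / ξ)) volume ∧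
    Integrable (fun ξ : ℝ => (|ξ - 1| ^ (-q) - |ξ + 1| ^ (-q)) / ξ) volume ∧
    ∀ ξ : ℝ, ξ ≠ 1 → ξ ≠ -1 → 0 ≤ (|ξ - 1| ^ (-q) - |ξ + 1| ^ (-q)) / ξ := by
  have hs : Real.sin (Real.pi * q / 2) ≠ 0 :=
    (Real.sin_pos_of_pos_of_lt_pi (by positivity) (by nlinarith [Real.pi_pos])).ne'
  have hc : Real.cos (Real.pi * q / 2) ≠ 0 :=
    (Real.cos_pos_of_mem_Ioo ⟨by nlinarith [Real.pi_pos], by nlinarith [Real.pi_pos]⟩).ne'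
  obtain ⟨hint, hval⟩ := levy_integrable_and_integral hq0 hq1 x y
  refine ⟨?_, hint, ?_, fun ξ h h' => levyDensity_nonneg hq0 h h'⟩
  · simp only [levyDensity] at hval
    rw [hval, Real.cot_eq_cos_div_sin, Real.tan_eq_sin_div_cos]
    field_simp
  · simpa [levyDensity] using (levy_integrable_and_integral hq0 hq1 1 0).1
end

section
/- Let a_1 > a_2 > … > a_n > 0 and let ‖x‖ = a_1 x_1^* + … + a_n x_n^* be the norm of the Lorentz space ℓ_{w,1}^n on ℝ^n. Let B^* = { y ∈ ℝ^n : Σ_{i=1}^n x_i y_i ≤ 1 for every x with ‖x‖ ≤ 1 } be the unit ball of the dual norm. Then the set of extreme points of B^* is exactly the set of all sign-changed permutations of (a_1, …, a_n), i.e., { (ε_1 a_{σ(1)}, …, ε_n a_{σ(n)}) : σ a permutation of {1,…,n}, ε_i ∈ {−1, 1} }. -/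
/-!
Write `N x = ∑ a i * dstar x i` and let `S` be the finite set of sign-changed permutations of `a`.
By the rearrangement inequality, `N x` is the maximum of `∑ x i * s i` over `s ∈ S`
(`pairing_le_lorentz`, `exists_lorentz_eq_pairing`), i.e. `N` is the support function of `S`.
Hence the dual ball contains `S`, and by Hahn-Banach separation it is contained in the convex hull
of `S`; so its extreme points lie in `S`. Conversely, all points of `S` have the same Euclidean
norm, which bounds the Euclidean norm on the whole dual ball (`sum_sq_le_of_mem_dual`); since
Euclidean balls are strictly convex, every point of `S` is extreme.
-/

/-- The non-increasing rearrangement of `(|x 0|, …, |x (n-1)|)`. -/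
noncomputable def dstar {n : ℕ} (x : Fin n → ℝ) : Fin n → ℝ :=
  fun i => |x (Tuple.sort (fun j => -|x j|) i)|

/-- The sign-changed permutations of `a`. -/
def signedPerms {n : ℕ} (a : Fin n → ℝ) : Set (Fin n → ℝ) :=
  {y : Fin n → ℝ | ∃ (σ : Equiv.Perm (Fin n)) (ε : Fin n → ℝ),
    (∀ i, ε i = 1 ∨ ε i = -1) ∧ y = fun i => ε i * a (σ i)}

lemma signedPerms_finite {n : ℕ} (a : Fin n → ℝ) : (signedPerms a).Finite := by
  have hε : {ε : Fin n → ℝ | ∀ i, ε i = 1 ∨ ε i = -1}.Finite := by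
    have h := Set.Finite.pi' (fun _ : Fin n => Set.toFinite ({1, -1} : Set ℝ))
    exact h.subset fun ε h i => h i
  refine (((Set.finite_univ (α := Equiv.Perm (Fin n))).prod hε).image
    (fun p i => p.2 i * a (p.1 i))).subset ?_
  rintro y ⟨σ, ε, h, rfl⟩
  exact ⟨(σ, ε), ⟨Set.mem_univ _, h⟩, rfl⟩

lemma antitone_dstar {n : ℕ} (x : Fin n → ℝ) : Antitone (dstar x) := by
  intro i j hij
  have h := Tuple.monotone_sort (fun j => -|x j|) hij
  simp only [Function.comp_apply, neg_le_neg_iff] at h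
  exact h

lemma pairing_le_lorentz {n : ℕ} {a : Fin n → ℝ} (hpos : ∀ i, 0 < a i) (hanti : StrictAnti a)
    {s : Fin n → ℝ} (hs : s ∈ signedPerms a) (x : Fin n → ℝ) :
    ∑ i, x i * s i ≤ ∑ i, a i * dstar x i := by
  obtain ⟨σ, ε, hε, rfl⟩ := hs
  set τ := Tuple.sort (fun j => -|x j|) with hτ
  calc ∑ i, x i * (ε i * a (σ i)) ≤ ∑ i, a (σ i) * |x i| := by
        refine Finset.sum_le_sum fun i _ => ?_
        have h1 := le_abs_self (x i)
        have h2 := neg_le_abs (x i)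
        have h3 := hpos (σ i)
        rcases hε i with h | h <;> rw [h] <;> nlinarith
    _ = ∑ i, a ((τ.trans σ) i) * dstar x i :=
        (Equiv.sum_comp τ (fun i => a (σ i) * |x i|)).symm
    _ ≤ ∑ i, a i * dstar x i :=
        (hanti.antitone.monovary (antitone_dstar x)).sum_comp_perm_mul_le_sum_mul

lemma exists_lorentz_eq_pairing {n : ℕ} (a x : Fin n → ℝ) :
    ∃ s ∈ signedPerms a, ∑ i, a i * dstar x i = ∑ i, x i * s i := by
  set τ := Tuple.sort (fun j => -|x j|) with hτ
  refine ⟨_, ⟨τ.symm, fun i => if 0 ≤ x i then 1 else -1, ?_, rfl⟩, ?_⟩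
  · intro i
    by_cases h : 0 ≤ x i <;> simp [h]
  · conv_rhs => rw [← Equiv.sum_comp τ]
    refine Finset.sum_congr rfl fun i _ => ?_
    simp only [dstar, ← hτ, Equiv.symm_apply_apply]
    split_ifs with h
    · rw [abs_of_nonneg h]; ring
    · rw [abs_of_neg (not_le.mp h)]; ring

/-- The homogeneous form of membership in the dual ball. -/
lemma pairing_le_lorentz_of_mem_dual {n : ℕ} {a : Fin n → ℝ} (hpos : ∀ i, 0 < a i)
    (hanti : StrictAnti a) {y : Fin n → ℝ}
    (hy : ∀ x : Fin n → ℝ, (∑ i, a i * dstar x i) ≤ 1 → (∑ i, x i * y i) ≤ 1)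
    (x : Fin n → ℝ) : ∑ i, x i * y i ≤ ∑ i, a i * dstar x i := by
  by_contra! hlt
  have h0 : 0 ≤ ∑ i, a i * dstar x i :=
    Finset.sum_nonneg fun i _ => mul_nonneg (hpos i).le (abs_nonneg _)
  -- Dividing by an intermediate `r > 0` avoids a separate case for vectors of norm zero.
  obtain ⟨r, hr1, hr2⟩ := exists_between hlt
  have hr : 0 < r := h0.trans_lt hr1
  have pull : ∀ s : Fin n → ℝ, ∑ i, r⁻¹ * x i * s i = r⁻¹ * ∑ i, x i * s i := fun s => by
    simp only [Finset.mul_sum, mul_assoc]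
  have key := hy (fun i => r⁻¹ * x i) (by
    obtain ⟨s, hs, h⟩ := exists_lorentz_eq_pairing a (fun i => r⁻¹ * x i)
    rw [h, pull, inv_mul_le_iff₀ hr, mul_one]
    exact (pairing_le_lorentz hpos hanti hs x).trans hr1.le)
  rw [pull, inv_mul_le_iff₀ hr, mul_one] at key
  exact key.not_gt hr2

lemma sum_sq_of_mem_signedPerms {n : ℕ} {a s : Fin n → ℝ} (hs : s ∈ signedPerms a) :
    ∑ i, s i ^ 2 = ∑ i, a i ^ 2 := by
  obtain ⟨σ, ε, hε, rfl⟩ := hs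
  rw [← Equiv.sum_comp σ (fun i => a i ^ 2)]
  refine Finset.sum_congr rfl fun i _ => ?_
  rcases hε i with h | h <;> simp [h]

/-- Pairing `y` with itself gives `|y|² ≤ ⟨y, s⟩ ≤ (|y|² + |s|²) / 2` for some signed
permutation `s` of `a`, where `|·|` is the Euclidean norm. -/
lemma sum_sq_le_of_mem_dual {n : ℕ} {a : Fin n → ℝ} (hpos : ∀ i, 0 < a i)
    (hanti : StrictAnti a) {y : Fin n → ℝ}
    (hy : ∀ x : Fin n → ℝ, (∑ i, a i * dstar x i) ≤ 1 → (∑ i, x i * y i) ≤ 1) :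
    ∑ i, y i ^ 2 ≤ ∑ i, a i ^ 2 := by
  have h1 := pairing_le_lorentz_of_mem_dual hpos hanti hy y
  obtain ⟨s, hs, h⟩ := exists_lorentz_eq_pairing a y
  have h2 : 0 ≤ ∑ i, (y i - s i) ^ 2 := Finset.sum_nonneg fun i _ => sq_nonneg _
  have h3 : ∑ i, (y i - s i) ^ 2 = ∑ i, y i ^ 2 - 2 * ∑ i, y i * s i + ∑ i, s i ^ 2 := by
    rw [Finset.mul_sum, ← Finset.sum_sub_distrib, ← Finset.sum_add_distrib]
    exact Finset.sum_congr rfl fun i _ => by ring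
  have h4 : ∑ i, y i * y i = ∑ i, y i ^ 2 := Finset.sum_congr rfl fun i _ => by ring
  have h5 := sum_sq_of_mem_signedPerms hs
  linarith

lemma mem_convexHull_of_mem_dual {n : ℕ} {a : Fin n → ℝ} (hpos : ∀ i, 0 < a i)
    (hanti : StrictAnti a) {y : Fin n → ℝ}
    (hy : ∀ x : Fin n → ℝ, (∑ i, a i * dstar x i) ≤ 1 → (∑ i, x i * y i) ≤ 1) :
    y ∈ convexHull ℝ (signedPerms a) := by
  by_contra hnot
  obtain ⟨f, u, hf, hu⟩ := geometric_hahn_banach_closed_point (convex_convexHull ℝ (signedPerms a))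
    ((signedPerms_finite a).isClosed_convexHull (𝕜 := ℝ)) hnot
  have hrep : ∀ z : Fin n → ℝ, f z = ∑ i, f (Pi.single i 1) * z i := by
    intro z
    conv_lhs => rw [pi_eq_sum_univ' z, map_sum]
    refine Finset.sum_congr rfl fun i _ => ?_
    rw [map_smul, smul_eq_mul, mul_comm]
  obtain ⟨s, hs, h⟩ := exists_lorentz_eq_pairing a (fun i => f (Pi.single i 1))
  have h1 := pairing_le_lorentz_of_mem_dual hpos hanti hy (fun i => f (Pi.single i 1))
  rw [h, ← hrep, ← hrep] at h1
  exact absurd (hf s (subset_convexHull ℝ _ hs)) (by linarith)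

/-- For strictly decreasing positive weights `a`, the extreme points of the
unit ball of the dual of `ℓ_{w,1}^n` are exactly the sign-changed
permutations of `(a 0, …, a (n-1))`. -/
theorem stmt18 (n : ℕ) (hn : 1 ≤ n) (a : Fin n → ℝ)
    (hpos : ∀ i, 0 < a i) (hanti : StrictAnti a) :
    Set.extremePoints ℝ
        {y : Fin n → ℝ | ∀ x : Fin n → ℝ,
          (∑ i, a i * dstar x i) ≤ 1 → (∑ i, x i * y i) ≤ 1} =
      {y : Fin n → ℝ | ∃ (σ : Equiv.Perm (Fin n)) (ε : Fin n → ℝ),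
        (∀ i, ε i = 1 ∨ ε i = -1) ∧ y = fun i => ε i * a (σ i)} := by
  change _ = signedPerms a
  have hsub : signedPerms a ⊆ {y : Fin n → ℝ | ∀ x : Fin n → ℝ,
      (∑ i, a i * dstar x i) ≤ 1 → (∑ i, x i * y i) ≤ 1} :=
    fun s hs x hx => (pairing_le_lorentz hpos hanti hs x).trans hx
  refine Set.Subset.antisymm (fun y hy => ?_) (fun y hy => ?_)
  · refine extremePoints_convexHull_subset (𝕜 := ℝ) ?_
    refine inter_extremePoints_subset_extremePoints_of_subset ?_
      ⟨mem_convexHull_of_mem_dual hpos hanti hy.1, hy⟩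
    refine convexHull_min hsub ?_
    intro z hz w hw s t hs ht hst x hx
    have h : ∑ i, x i * (s • z + t • w) i = s * ∑ i, x i * z i + t * ∑ i, x i * w i := by
      rw [Finset.mul_sum, Finset.mul_sum, ← Finset.sum_add_distrib]
      refine Finset.sum_congr rfl fun i _ => ?_
      simp only [Pi.add_apply, Pi.smul_apply, smul_eq_mul]
      ring
    rw [h]
    nlinarith [hz x hx, hw x hx]
  · refine ⟨hsub hy, ?_⟩
    rintro z hz w hw ⟨s, t, hs, ht, hst, hyz⟩
    have hz2 := sum_sq_le_of_mem_dual hpos hanti hz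
    have hw2 := sum_sq_le_of_mem_dual hpos hanti hw
    have hy2 := sum_sq_of_mem_signedPerms hy
    obtain rfl : t = 1 - s := by linarith
    -- Strict convexity of the square: `s z² + (1 - s) w² - (s z + (1 - s) w)² = s (1 - s) (z - w)²`.
    have hid : s * (1 - s) * ∑ i, (z i - w i) ^ 2
        = s * ∑ i, z i ^ 2 + (1 - s) * ∑ i, w i ^ 2 - ∑ i, y i ^ 2 := by
      simp only [Finset.mul_sum]
      rw [← Finset.sum_add_distrib, ← Finset.sum_sub_distrib]
      refine Finset.sum_congr rfl fun i _ => ?_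
      rw [← hyz]
      simp only [Pi.add_apply, Pi.smul_apply, smul_eq_mul]
      ring
    have hle : s * (1 - s) * ∑ i, (z i - w i) ^ 2 ≤ 0 := by nlinarith
    have hnn : ∀ i ∈ Finset.univ, 0 ≤ (z i - w i) ^ 2 := fun i _ => sq_nonneg _
    have hzero : ∑ i, (z i - w i) ^ 2 = 0 :=
      le_antisymm (nonpos_of_mul_nonpos_right hle (mul_pos hs ht)) (Finset.sum_nonneg hnn)
    have hzw : z = w := by
      ext i
      have h := (Finset.sum_eq_zero_iff_of_nonneg hnn).mp hzero i (Finset.mem_univ i)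
      exact sub_eq_zero.mp (pow_eq_zero_iff two_ne_zero |>.mp h)
    rw [← hyz, ← hzw, ← add_smul, hst, one_smul]
end
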